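/- Modified Klainerman–Sobolev inequality (inner region): for f ∈ C^∞(ℝ^{1+2}), t ≥ 1, s ≥ 0, δ ∈ (0,1], and any point (t,x) with |x| ≤ t/4, one has |f(t,x)| ≲ ∑_{i=0}^2 t^{-1} δ^{(i-1)s} ‖Γ̄^i f(t,·)‖_{L²(|y| ≤ t/2)}, where Γ̄ ranges over {S, H_1, H_2, Ω} and Γ̄^i denotes products of i such fields; the implicit constant is independent of t, δ, s and f. -/

import Mathlib

open MeasureTheory

/-- `∂_t f`. -/
noncomputable def pdt (f : ℝ × ℝ × ℝ → ℝ) (p : ℝ × ℝ × ℝ) : ℝ := fderiv ℝ f p (1, 0, 0)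
/-- `∂_1 f`. -/
noncomputable def pd1 (f : ℝ × ℝ × ℝ → ℝ) (p : ℝ × ℝ × ℝ) : ℝ := fderiv ℝ f p (0, 1, 0)
/-- `∂_2 f`. -/
noncomputable def pd2 (f : ℝ × ℝ × ℝ → ℝ) (p : ℝ × ℝ × ℝ) : ℝ := fderiv ℝ f p (0, 0, 1)

/-- The Klainerman fields `Γ̄ ∈ {S, H₁, H₂, Ω}`. -/
noncomputable def Gbar (i : Fin 4) (f : ℝ × ℝ × ℝ → ℝ) (p : ℝ × ℝ × ℝ) : ℝ :=
  if i = 0 then p.1 * pdt f p + p.2.1 * pd1 f p + p.2.2 * pd2 f p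
  else if i = 1 then p.1 * pd1 f p + p.2.1 * pdt f p
  else if i = 2 then p.1 * pd2 f p + p.2.2 * pdt f p
  else p.2.1 * pd2 f p - p.2.2 * pd1 f p

/-- `L²` norm of `g(t,·)` over the disc of radius `R`. -/
noncomputable def L2ball (g : ℝ × ℝ × ℝ → ℝ) (t R : ℝ) : ℝ :=
  Real.sqrt (∫ y in {y : ℝ × ℝ | y.1 ^ 2 + y.2 ^ 2 ≤ R ^ 2}, (g (t, y.1, y.2)) ^ 2)

/-! On the square of side `h = ε t / 8` with corner `x`, which stays in the disc `|y| ≤ t / 2`,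
the two-dimensional Sobolev inequality bounds `|f(t, x)|` by the `L²` norms of `h⁻¹ f`, `∂₁ f`,
`∂₂ f` and `h ∂₂ ∂₁ f`. In the cone `|y| ≤ t / 2` the Minkowski form `t² - |y|²` is comparable to
`t²`, so the fields `S, H₁, H₂, Ω` can be solved for `∂₁` and `∂₂`, and every derivative gains a
factor `t⁻¹`. The choice `ε = δ ^ s` distributes the powers of `δ` as claimed. -/

open Set

section Sobolev

variable {E : Type*} [NormedAddCommGroup E] [NormedSpace ℝ E] [CompleteSpace E]

theorem norm_le_setIntegral_Icc {u u' : ℝ → E} {a b : ℝ} (hab : a < b)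
    (hu : ContinuousOn u (Icc a b)) (hu' : ContinuousOn u' (Icc a b))
    (hderiv : ∀ x ∈ Ioo a b, HasDerivAt u (u' x) x) :
    ‖u a‖ ≤ ∫ x in Icc a b, (‖u x‖ / (b - a) + ‖u' x‖) := by
  have hba : 0 < b - a := sub_pos.2 hab
  -- The weight `w` interpolates between `w a = -1` and `w b = 0`.
  let w : ℝ → ℝ := fun x => (x - b) / (b - a)
  have hw : Continuous w := by fun_prop
  have hw_deriv (x : ℝ) : HasDerivAt w (1 / (b - a)) x :=
    ((hasDerivAt_id x).sub_const b).div_const (b - a)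
  have hw_abs : ∀ x ∈ Icc a b, |w x| ≤ 1 := fun x hx => by
    rw [abs_div, abs_of_pos hba, div_le_one hba, abs_le]
    constructor <;> linarith [hx.1, hx.2]
  have hint : ContinuousOn (fun x => w x • u' x + (1 / (b - a)) • u x) (Icc a b) := by fun_prop
  have hftc : ∫ x in a..b, (w x • u' x + (1 / (b - a)) • u x) = u a := by
    rw [intervalIntegral.integral_eq_sub_of_hasDerivAt_of_le hab.le (hw.continuousOn.smul hu)
      (fun x hx => (hw_deriv x).smul (hderiv x hx)) (hint.intervalIntegrable_of_Icc hab.le)]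
    have hwa : w a = -1 := by simp only [w]; field_simp; ring
    have hwb : w b = 0 := by simp only [w, sub_self, zero_div]
    rw [Pi.smul_apply', Pi.smul_apply', hwa, hwb, zero_smul, neg_one_smul, zero_sub, neg_neg]
  calc ‖u a‖ = ‖∫ x in Icc a b, (w x • u' x + (1 / (b - a)) • u x)‖ := by
        rw [← hftc, intervalIntegral.integral_of_le hab.le, integral_Icc_eq_integral_Ioc]
    _ ≤ ∫ x in Icc a b, ‖w x • u' x + (1 / (b - a)) • u x‖ := norm_integral_le_integral_norm _
    _ ≤ ∫ x in Icc a b, (‖u x‖ / (b - a) + ‖u' x‖) := by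
        refine setIntegral_mono_on (hint.norm.integrableOn_compact isCompact_Icc)
          (ContinuousOn.integrableOn_compact isCompact_Icc (by fun_prop)) measurableSet_Icc
          fun x hx => ?_
        calc ‖w x • u' x + (1 / (b - a)) • u x‖
            ≤ |w x| * ‖u' x‖ + |1 / (b - a)| * ‖u x‖ :=
              (norm_add_le _ _).trans_eq (by simp only [norm_smul, Real.norm_eq_abs])
          _ ≤ 1 * ‖u' x‖ + 1 / (b - a) * ‖u x‖ := by
              rw [abs_of_pos (one_div_pos.2 hba)]
              gcongr
              exact hw_abs x hx
          _ = ‖u x‖ / (b - a) + ‖u' x‖ := by ring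

theorem norm_le_setIntegral_Icc_prod_Icc {g g₁ g₂ g₁₂ : ℝ × ℝ → E} {a b c d : ℝ}
    (hab : a < b) (hcd : c < d)
    (hg : ContinuousOn g (Icc a b ×ˢ Icc c d)) (hg₁ : ContinuousOn g₁ (Icc a b ×ˢ Icc c d))
    (hg₂ : ContinuousOn g₂ (Icc a b ×ˢ Icc c d)) (hg₁₂ : ContinuousOn g₁₂ (Icc a b ×ˢ Icc c d))
    (h₁ : ∀ x ∈ Ioo a b, HasDerivAt (fun x => g (x, c)) (g₁ (x, c)) x)
    (h₂ : ∀ x ∈ Icc a b, ∀ y ∈ Ioo c d, HasDerivAt (fun y => g (x, y)) (g₂ (x, y)) y)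
    (h₁₂ : ∀ x ∈ Icc a b, ∀ y ∈ Ioo c d, HasDerivAt (fun y => g₁ (x, y)) (g₁₂ (x, y)) y) :
    ‖g (a, c)‖ ≤ ∫ p in Icc a b ×ˢ Icc c d,
      ((‖g p‖ / (d - c) + ‖g₂ p‖) / (b - a) + (‖g₁ p‖ / (d - c) + ‖g₁₂ p‖)) := by
  have hc : c ∈ Icc c d := left_mem_Icc.2 hcd.le
  have hbottom {k : ℝ × ℝ → E} (hk : ContinuousOn k (Icc a b ×ˢ Icc c d)) :
      ContinuousOn (fun x => k (x, c)) (Icc a b) :=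
    hk.comp (by fun_prop) fun x hx => ⟨hx, hc⟩
  have hslice {k : ℝ × ℝ → E} (hk : ContinuousOn k (Icc a b ×ˢ Icc c d)) {x : ℝ}
      (hx : x ∈ Icc a b) : ContinuousOn (fun y => k (x, y)) (Icc c d) :=
    hk.comp (by fun_prop) fun y hy => ⟨hx, hy⟩
  have hslice_int {k l : ℝ × ℝ → E} (hk : ContinuousOn k (Icc a b ×ˢ Icc c d))
      (hl : ContinuousOn l (Icc a b ×ˢ Icc c d)) {x : ℝ} (hx : x ∈ Icc a b) :
      IntegrableOn (fun y => ‖k (x, y)‖ / (d - c) + ‖l (x, y)‖) (Icc c d) :=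
    (((hslice hk hx).norm.div_const _).add (hslice hl hx).norm).integrableOn_compact isCompact_Icc
  have hint : IntegrableOn
      (fun p => (‖g p‖ / (d - c) + ‖g₂ p‖) / (b - a) + (‖g₁ p‖ / (d - c) + ‖g₁₂ p‖))
      (Icc a b ×ˢ Icc c d) (volume.prod volume) :=
    ContinuousOn.integrableOn_compact (isCompact_Icc.prod isCompact_Icc) (by fun_prop)
  rw [Measure.volume_eq_prod, setIntegral_prod _ hint]
  refine (norm_le_setIntegral_Icc hab (hbottom hg) (hbottom hg₁) h₁).trans
    (setIntegral_mono_on ?_ ?_ measurableSet_Icc fun x hx => ?_)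
  · exact (((hbottom hg).norm.div_const _).add (hbottom hg₁).norm).integrableOn_compact
      isCompact_Icc
  · rw [IntegrableOn, ← Measure.prod_restrict] at hint
    exact hint.integral_prod_left
  · rw [integral_add ((hslice_int hg hg₂ hx).div_const _) (hslice_int hg₁ hg₁₂ hx), integral_div]
    refine add_le_add (div_le_div_of_nonneg_right ?_ (sub_nonneg.2 hab.le)) ?_
    · exact norm_le_setIntegral_Icc hcd (hslice hg hx) (hslice hg₂ hx) (h₂ x hx)
    · exact norm_le_setIntegral_Icc hcd (hslice hg₁ hx) (hslice hg₁₂ hx) (h₁₂ x hx)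

end Sobolev

section Lp

variable {α E : Type*} {m : MeasurableSpace α} [NormedAddCommGroup E] {q : ENNReal}

theorem memLp_restrict_of_isCompact [TopologicalSpace α] [OpensMeasurableSpace α]
    {μ : Measure α} [IsFiniteMeasureOnCompacts μ] {f : α → E} {K : Set α}
    (hK : IsCompact K) (hKm : MeasurableSet K) (hf : ContinuousOn f K) :
    MemLp f q (μ.restrict K) := by
  have : IsFiniteMeasure (μ.restrict K) := isFiniteMeasure_restrict.2 hK.measure_ne_top
  obtain ⟨C, hC⟩ := hK.exists_bound_of_continuousOn hf
  exact .of_bound (hf.aestronglyMeasurable_of_isCompact hK hKm) C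
    ((ae_restrict_mem hKm).mono hC)

theorem integral_norm_le_lpNorm_mul_rpow {μ ν : Measure α} [IsFiniteMeasure ν] {f : α → E}
    (hνμ : ν ≤ μ) (hq : 1 ≤ q) (hf : MemLp f q μ) :
    ∫ x, ‖f x‖ ∂ν ≤ lpNorm f q μ * ν.real univ ^ (1 - 1 / q.toReal) := by
  have hfν : MemLp f q ν := hf.mono_measure hνμ
  have hexp : 0 ≤ 1 - 1 / q.toReal := by
    rcases eq_or_ne q ⊤ with rfl | hq_top
    · simp
    · exact sub_nonneg.2 (div_le_one_of_le₀ (by simpa using ENNReal.toReal_mono hq_top hq)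
        ENNReal.toReal_nonneg)
  have hbound : eLpNorm f 1 ν ≤ eLpNorm f q μ * ν univ ^ (1 - 1 / q.toReal) := by
    calc eLpNorm f 1 ν ≤ eLpNorm f q ν * ν univ ^ (1 - 1 / q.toReal) := by
          simpa using eLpNorm_le_eLpNorm_mul_rpow_measure_univ hq hfν.1
      _ ≤ eLpNorm f q μ * ν univ ^ (1 - 1 / q.toReal) := by
          gcongr
  rw [← lpNorm_one_eq_integral_norm hfν.1, ← toReal_eLpNorm hfν.1, ← toReal_eLpNorm hf.1,
    measureReal_def, ENNReal.toReal_rpow, ← ENNReal.toReal_mul]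
  exact ENNReal.toReal_mono (ENNReal.mul_ne_top hf.eLpNorm_ne_top
    (ENNReal.rpow_ne_top_of_nonneg hexp (measure_ne_top ν univ))) hbound

end Lp

section L2ball

/-- The closed Euclidean disc of radius `|R|` about the origin of the plane; `ℝ × ℝ` carries the
supremum norm, so this is not `Metric.closedBall`. -/
def disc (R : ℝ) : Set (ℝ × ℝ) := {y | y.1 ^ 2 + y.2 ^ 2 ≤ R ^ 2}

theorem mem_disc {R : ℝ} {y : ℝ × ℝ} : y ∈ disc R ↔ y.1 ^ 2 + y.2 ^ 2 ≤ R ^ 2 := Iff.rfl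

theorem isCompact_disc (R : ℝ) : IsCompact (disc R) := by
  have hbox : IsCompact (Icc (-|R|) |R| ×ˢ Icc (-|R|) |R|) := isCompact_Icc.prod isCompact_Icc
  have hclosed : IsClosed (disc R) := isClosed_le (by fun_prop) (by fun_prop)
  refine hbox.of_isClosed_subset hclosed fun y hy => ?_
  rw [mem_disc] at hy
  exact ⟨abs_le.1 (sq_le_sq.1 (by linarith [sq_nonneg y.2])),
    abs_le.1 (sq_le_sq.1 (by linarith [sq_nonneg y.1]))⟩

theorem square_subset_disc {a b h t : ℝ} (hab : (a, b) ∈ disc (t / 4)) (hht : h ≤ t / 8) :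
    Icc a (a + h) ×ˢ Icc b (b + h) ⊆ disc (t / 2) := by
  rintro ⟨x, y⟩ ⟨⟨hx₁, hx₂⟩, hy₁, hy₂⟩
  rw [mem_disc] at hab ⊢
  simp only at hab hx₁ hx₂ hy₁ hy₂ ⊢
  have hx : (x - a) ^ 2 ≤ (t / 8) ^ 2 := by gcongr; linarith
  have hy : (y - b) ^ 2 ≤ (t / 8) ^ 2 := by gcongr; linarith
  linarith [sq_nonneg (x - 2 * a), sq_nonneg (y - 2 * b), sq_nonneg t]

variable {g : ℝ × ℝ × ℝ → ℝ} {t R : ℝ}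

theorem memLp_restrict_disc (hg : Continuous g) (t R : ℝ) :
    MemLp (fun y : ℝ × ℝ => g (t, y)) 2 (volume.restrict (disc R)) :=
  memLp_restrict_of_isCompact (isCompact_disc R) (isCompact_disc R).measurableSet
    (by fun_prop : Continuous fun y : ℝ × ℝ => g (t, y)).continuousOn

theorem L2ball_eq_lpNorm (hg : Continuous g) (t R : ℝ) :
    L2ball g t R = lpNorm (fun y : ℝ × ℝ => g (t, y)) 2 (volume.restrict (disc R)) := by
  rw [lpNorm_eq_integral_norm_rpow_toReal two_ne_zero ENNReal.ofNat_ne_top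
    (memLp_restrict_disc hg t R).1]
  simp only [ENNReal.toReal_ofNat, Real.rpow_two, Real.norm_eq_abs, sq_abs]
  rw [← one_div, ← Real.sqrt_eq_rpow]
  rfl

theorem L2ball_nonneg (g : ℝ × ℝ × ℝ → ℝ) (t R : ℝ) : 0 ≤ L2ball g t R := Real.sqrt_nonneg _

theorem L2ball_mono {G : ℝ × ℝ × ℝ → ℝ} (hG : Continuous G)
    (h : ∀ y ∈ disc R, |g (t, y)| ≤ |G (t, y)|) : L2ball g t R ≤ L2ball G t R := by
  refine Real.sqrt_le_sqrt (integral_mono_of_nonneg (.of_forall fun y => sq_nonneg _)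
    (memLp_restrict_disc hG t R).integrable_sq ?_)
  filter_upwards [ae_restrict_mem (isCompact_disc R).measurableSet] with y hy
  exact sq_le_sq.2 (h y hy)

theorem L2ball_le_mul_sum {ι : Type*} [Fintype ι] {G : ι → ℝ × ℝ × ℝ → ℝ} {c : ℝ}
    (hc : 0 ≤ c) (hG : ∀ i, Continuous (G i))
    (h : ∀ y ∈ disc R, |g (t, y)| ≤ c * ∑ i, |G i (t, y)|) :
    L2ball g t R ≤ c * ∑ i, L2ball (G i) t R := by
  have habs (i : ι) : MemLp (fun y : ℝ × ℝ => |G i (t, y)|) 2 (volume.restrict (disc R)) :=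
    (memLp_restrict_disc (hG i) t R).abs
  have hcont : Continuous fun p => c * ∑ i, |G i p| := by fun_prop
  calc L2ball g t R ≤ L2ball (fun p => c * ∑ i, |G i p|) t R :=
        L2ball_mono hcont fun y hy => (h y hy).trans (le_abs_self _)
    _ = c * lpNorm (∑ i, fun y : ℝ × ℝ => |G i (t, y)|) 2 (volume.restrict (disc R)) := by
        have hsmul : (fun y : ℝ × ℝ => c * ∑ i, |G i (t, y)|) =
            c • ∑ i, fun y : ℝ × ℝ => |G i (t, y)| := by
          ext y
          simp
        rw [L2ball_eq_lpNorm hcont, hsmul, lpNorm_const_smul, coe_nnnorm, Real.norm_of_nonneg hc]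
    _ ≤ c * ∑ i, lpNorm (fun y : ℝ × ℝ => |G i (t, y)|) 2 (volume.restrict (disc R)) := by
        gcongr
        exact lpNorm_sum_le (fun i _ => habs i) one_le_two
    _ = c * ∑ i, L2ball (G i) t R := by
        congr! 2 with i
        rw [lpNorm_fun_abs (memLp_restrict_disc (hG i) t R).1, L2ball_eq_lpNorm (hG i)]

theorem setIntegral_square_abs_le_mul_L2ball (hg : Continuous g) {a b h : ℝ} (hh : 0 ≤ h)
    (hsub : Icc a (a + h) ×ˢ Icc b (b + h) ⊆ disc R) :
    ∫ y in Icc a (a + h) ×ˢ Icc b (b + h), |g (t, y)| ≤ h * L2ball g t R := by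
  have hvol : volume.real (Icc a (a + h) ×ˢ Icc b (b + h)) = h ^ 2 := by
    rw [Measure.volume_eq_prod, measureReal_prod_prod, Real.volume_real_Icc_of_le (by linarith),
      Real.volume_real_Icc_of_le (by linarith)]
    ring
  have : IsFiniteMeasure (volume.restrict (Icc a (a + h) ×ˢ Icc b (b + h))) :=
    isFiniteMeasure_restrict.2 (isCompact_Icc.prod isCompact_Icc).measure_ne_top
  refine (integral_norm_le_lpNorm_mul_rpow (Measure.restrict_mono_set volume hsub) one_le_two
    (memLp_restrict_disc hg t R)).trans_eq ?_
  rw [measureReal_restrict_apply_univ, hvol, ← L2ball_eq_lpNorm hg, ENNReal.toReal_ofNat,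
    show (1 : ℝ) - 1 / 2 = 1 / 2 by norm_num, ← Real.sqrt_eq_rpow, Real.sqrt_sq hh, mul_comm]

end L2ball

section Derivatives

variable {f : ℝ × ℝ × ℝ → ℝ} {m n : WithTop ℕ∞}

theorem contDiff_pdt (hf : ContDiff ℝ n f) (hmn : m + 1 ≤ n) : ContDiff ℝ m (pdt f) :=
  (hf.fderiv_right hmn).clm_apply contDiff_const

theorem contDiff_pd1 (hf : ContDiff ℝ n f) (hmn : m + 1 ≤ n) : ContDiff ℝ m (pd1 f) :=
  (hf.fderiv_right hmn).clm_apply contDiff_const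

theorem contDiff_pd2 (hf : ContDiff ℝ n f) (hmn : m + 1 ≤ n) : ContDiff ℝ m (pd2 f) :=
  (hf.fderiv_right hmn).clm_apply contDiff_const

theorem contDiff_Gbar (hf : ContDiff ℝ n f) (hmn : m + 1 ≤ n) (i : Fin 4) :
    ContDiff ℝ m (Gbar i f) := by
  have ht := contDiff_pdt hf hmn
  have h₁ := contDiff_pd1 hf hmn
  have h₂ := contDiff_pd2 hf hmn
  unfold Gbar
  split_ifs <;> fun_prop

theorem hasDerivAt_pd1 {t a b : ℝ} (hf : DifferentiableAt ℝ f (t, a, b)) :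
    HasDerivAt (fun x => f (t, x, b)) (pd1 f (t, a, b)) a :=
  hf.hasFDerivAt.comp_hasDerivAt a
    ((hasDerivAt_const a t).prodMk ((hasDerivAt_id a).prodMk (hasDerivAt_const a b)))

theorem hasDerivAt_pd2 {t a b : ℝ} (hf : DifferentiableAt ℝ f (t, a, b)) :
    HasDerivAt (fun y => f (t, a, y)) (pd2 f (t, a, b)) b :=
  hf.hasFDerivAt.comp_hasDerivAt b
    ((hasDerivAt_const b t).prodMk ((hasDerivAt_const b a).prodMk (hasDerivAt_id b)))

theorem abs_le_L2ball_of_square_subset_disc (hf : ContDiff ℝ 2 f) {t R a b h : ℝ} (hh : 0 < h)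
    (hsub : Icc a (a + h) ×ˢ Icc b (b + h) ⊆ disc R) :
    |f (t, a, b)| ≤ h⁻¹ * L2ball f t R + L2ball (pd1 f) t R + L2ball (pd2 f) t R +
      h * L2ball (pd2 (pd1 f)) t R := by
  have hf₁ : ContDiff ℝ 1 (pd1 f) := contDiff_pd1 hf one_add_one_eq_two.le
  have hf₂ : Continuous (pd2 f) := (contDiff_pd2 hf one_add_one_eq_two.le).continuous
  have hf₁₂ : Continuous (pd2 (pd1 f)) := (contDiff_pd2 (m := 0) hf₁ (zero_add 1).le).continuous
  have hf₀ : Continuous f := hf.continuous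
  have hd : Differentiable ℝ f := hf.differentiable two_ne_zero
  have hd₁ : Differentiable ℝ (pd1 f) := hf₁.differentiable one_ne_zero
  have hf₁' := hf₁.continuous
  set Q := Icc a (a + h) ×ˢ Icc b (b + h)
  have hint {g : ℝ × ℝ × ℝ → ℝ} (hg : Continuous g) :
      IntegrableOn (fun y : ℝ × ℝ => |g (t, y)|) Q :=
    ContinuousOn.integrableOn_compact (isCompact_Icc.prod isCompact_Icc) (by fun_prop)
  have hint_div {k l : ℝ × ℝ × ℝ → ℝ} (hk : Continuous k) (hl : Continuous l) :
      IntegrableOn (fun y : ℝ × ℝ => |k (t, y)| / h + |l (t, y)|) Q :=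
    ((hint hk).div_const h).add (hint hl)
  calc |f (t, a, b)|
      ≤ ∫ y in Q, ((|f (t, y)| / h + |pd2 f (t, y)|) / h +
          (|pd1 f (t, y)| / h + |pd2 (pd1 f) (t, y)|)) := by
        simpa only [add_sub_cancel_left, Real.norm_eq_abs] using
          norm_le_setIntegral_Icc_prod_Icc
          (g := fun y => f (t, y)) (g₁ := fun y => pd1 f (t, y)) (g₂ := fun y => pd2 f (t, y))
          (g₁₂ := fun y => pd2 (pd1 f) (t, y)) (lt_add_of_pos_right a hh)
          (lt_add_of_pos_right b hh) (by fun_prop) (by fun_prop) (by fun_prop) (by fun_prop)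
          (fun _ _ => hasDerivAt_pd1 (hd _)) (fun _ _ _ _ => hasDerivAt_pd2 (hd _))
          (fun _ _ _ _ => hasDerivAt_pd2 (hd₁ _))
    _ = ((∫ y in Q, |f (t, y)|) / h + ∫ y in Q, |pd2 f (t, y)|) / h +
          ((∫ y in Q, |pd1 f (t, y)|) / h + ∫ y in Q, |pd2 (pd1 f) (t, y)|) := by
        rw [integral_add ((hint_div hf₀ hf₂).div_const h) (hint_div hf₁' hf₁₂), integral_div,
          integral_add ((hint hf₀).div_const h) (hint hf₂),
          integral_add ((hint hf₁').div_const h) (hint hf₁₂), integral_div, integral_div]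
    _ ≤ (h * L2ball f t R / h + h * L2ball (pd2 f) t R) / h +
          (h * L2ball (pd1 f) t R / h + h * L2ball (pd2 (pd1 f)) t R) := by
        gcongr <;> exact setIntegral_square_abs_le_mul_L2ball (by assumption) hh.le hsub
    _ = _ := by field_simp; ring

end Derivatives

section KlainermanFields

/-- The Minkowski form `t² - |x|²`. -/
def minkowskiForm (p : ℝ × ℝ × ℝ) : ℝ := p.1 ^ 2 - p.2.1 ^ 2 - p.2.2 ^ 2

/-- The inner region `|x| ≤ t / 2`, `t > 0`, of the light cone. -/
def innerCone : Set (ℝ × ℝ × ℝ) := {p | 0 < p.1 ∧ p.2 ∈ disc (p.1 / 2)}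

/-- The coefficients of `(t² - |x|²) ∂₁` in terms of `S, H₁, H₂, Ω`. -/
def pd1Coeff (p : ℝ × ℝ × ℝ) : Fin 4 → ℝ := ![-p.2.1, p.1, 0, p.2.2]

/-- The coefficients of `(t² - |x|²) ∂₂` in terms of `S, H₁, H₂, Ω`. -/
def pd2Coeff (p : ℝ × ℝ × ℝ) : Fin 4 → ℝ := ![-p.2.2, 0, p.1, -p.2.1]

theorem minkowskiForm_mul_pd1 (f : ℝ × ℝ × ℝ → ℝ) (p : ℝ × ℝ × ℝ) :
    minkowskiForm p * pd1 f p = ∑ i, pd1Coeff p i * Gbar i f p := by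
  simp only [minkowskiForm, pd1Coeff, Gbar, Fin.sum_univ_four, Fin.isValue, ↓reduceIte,
    Fin.reduceEq, one_ne_zero, Matrix.cons_val_zero, Matrix.cons_val_one, Matrix.cons_val]
  ring

theorem minkowskiForm_mul_pd2 (f : ℝ × ℝ × ℝ → ℝ) (p : ℝ × ℝ × ℝ) :
    minkowskiForm p * pd2 f p = ∑ i, pd2Coeff p i * Gbar i f p := by
  simp only [minkowskiForm, pd2Coeff, Gbar, Fin.sum_univ_four, Fin.isValue, ↓reduceIte,
    Fin.reduceEq, one_ne_zero, Matrix.cons_val_zero, Matrix.cons_val_one, Matrix.cons_val]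
  ring

theorem minkowskiForm_mul_pd2_pd1 {f : ℝ × ℝ × ℝ → ℝ} (hf : ContDiff ℝ 2 f) (p : ℝ × ℝ × ℝ) :
    minkowskiForm p * pd2 (pd1 f) p =
      ∑ i, pd1Coeff p i * pd2 (Gbar i f) p + Gbar 3 f p + 2 * p.2.2 * pd1 f p := by
  obtain ⟨t, a, b⟩ := p
  have hd₁ : Differentiable ℝ (pd1 f) :=
    (contDiff_pd1 hf one_add_one_eq_two.le).differentiable one_ne_zero
  have hdΓ (i : Fin 4) : Differentiable ℝ (Gbar i f) :=
    (contDiff_Gbar hf one_add_one_eq_two.le i).differentiable one_ne_zero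
  have hleft : HasDerivAt (fun y => minkowskiForm (t, a, y) * pd1 f (t, a, y))
      (-(2 * b) * pd1 f (t, a, b) + minkowskiForm (t, a, b) * pd2 (pd1 f) (t, a, b)) b := by
    have hform : HasDerivAt (fun y => minkowskiForm (t, a, y)) (-(2 * b)) b := by
      unfold minkowskiForm
      simpa using (hasDerivAt_pow 2 b).const_sub (t ^ 2 - a ^ 2)
    exact hform.mul (hasDerivAt_pd2 (hd₁ _))
  have hcoeff (i : Fin 4) :
      HasDerivAt (fun y => pd1Coeff (t, a, y) i) ((![0, 0, 0, 1] : Fin 4 → ℝ) i) b := by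
    fin_cases i <;> simp [pd1Coeff, hasDerivAt_const, hasDerivAt_id']
  have hright : HasDerivAt (fun y => ∑ i, pd1Coeff (t, a, y) i * Gbar i f (t, a, y))
      (∑ i, ((![0, 0, 0, 1] : Fin 4 → ℝ) i * Gbar i f (t, a, b) +
        pd1Coeff (t, a, b) i * pd2 (Gbar i f) (t, a, b))) b :=
    HasDerivAt.fun_sum fun i _ => (hcoeff i).mul (hasDerivAt_pd2 (hdΓ i _))
  simp only [← minkowskiForm_mul_pd1] at hright
  have heq := hleft.unique hright
  have hΩ : ∑ i, (![0, 0, 0, 1] : Fin 4 → ℝ) i * Gbar i f (t, a, b) = Gbar 3 f (t, a, b) := by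
    simp [Fin.sum_univ_four]
  rw [Finset.sum_add_distrib, hΩ] at heq
  linarith

theorem sq_mul_abs_le_of_mem_innerCone {p : ℝ × ℝ × ℝ} (hp : p ∈ innerCone) (d : ℝ) :
    p.1 ^ 2 * |d| ≤ 4 / 3 * |minkowskiForm p * d| := by
  have ht : 0 < p.1 := hp.1
  have hy := mem_disc.1 hp.2
  have hform : p.1 ^ 2 ≤ 4 / 3 * minkowskiForm p := by
    unfold minkowskiForm
    linarith
  have hform_pos : 0 < minkowskiForm p := by linarith [pow_pos ht 2]
  calc p.1 ^ 2 * |d| ≤ 4 / 3 * minkowskiForm p * |d| := by gcongr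
    _ = 4 / 3 * |minkowskiForm p * d| := by rw [abs_mul, abs_of_pos hform_pos, mul_assoc]

theorem abs_fst_le_of_mem_innerCone {p : ℝ × ℝ × ℝ} (hp : p ∈ innerCone) : |p.2.1| ≤ p.1 / 2 := by
  have ht : 0 < p.1 := hp.1
  have hy := mem_disc.1 hp.2
  exact abs_le_of_sq_le_sq (by linarith [sq_nonneg p.2.2]) (by linarith)

theorem abs_snd_le_of_mem_innerCone {p : ℝ × ℝ × ℝ} (hp : p ∈ innerCone) : |p.2.2| ≤ p.1 / 2 := by
  have ht : 0 < p.1 := hp.1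
  have hy := mem_disc.1 hp.2
  exact abs_le_of_sq_le_sq (by linarith [sq_nonneg p.2.1]) (by linarith)

theorem abs_pd1Coeff_le {p : ℝ × ℝ × ℝ} (hp : p ∈ innerCone) (i : Fin 4) :
    |pd1Coeff p i| ≤ p.1 := by
  have ht : 0 < p.1 := hp.1
  have h₁ := abs_fst_le_of_mem_innerCone hp
  have h₂ := abs_snd_le_of_mem_innerCone hp
  fin_cases i
  · exact (abs_neg p.2.1).trans_le (by linarith)
  · exact (abs_of_pos ht).le
  · exact abs_zero.trans_le ht.le
  · exact h₂.trans (by linarith)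

theorem abs_pd2Coeff_le {p : ℝ × ℝ × ℝ} (hp : p ∈ innerCone) (i : Fin 4) :
    |pd2Coeff p i| ≤ p.1 := by
  have ht : 0 < p.1 := hp.1
  have h₁ := abs_fst_le_of_mem_innerCone hp
  have h₂ := abs_snd_le_of_mem_innerCone hp
  fin_cases i
  · exact (abs_neg p.2.2).trans_le (by linarith)
  · exact abs_zero.trans_le ht.le
  · exact (abs_of_pos ht).le
  · exact (abs_neg p.2.1).trans_le (by linarith)

theorem abs_sum_mul_le {ι : Type*} (s : Finset ι) {c g : ι → ℝ} {M : ℝ}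
    (hc : ∀ i ∈ s, |c i| ≤ M) : |∑ i ∈ s, c i * g i| ≤ M * ∑ i ∈ s, |g i| := by
  rw [Finset.mul_sum]
  refine (Finset.abs_sum_le_sum_abs _ _).trans (Finset.sum_le_sum fun i hi => ?_)
  rw [abs_mul]
  exact mul_le_mul_of_nonneg_right (hc i hi) (abs_nonneg _)

theorem abs_le_of_minkowskiForm_mul_eq_sum {ι : Type*} {s : Finset ι} {p : ℝ × ℝ × ℝ}
    (hp : p ∈ innerCone) {d : ℝ} {c g : ι → ℝ} (hc : ∀ i ∈ s, |c i| ≤ p.1)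
    (h : minkowskiForm p * d = ∑ i ∈ s, c i * g i) : |d| ≤ 2 / p.1 * ∑ i ∈ s, |g i| := by
  have ht : 0 < p.1 := hp.1
  have hsq : p.1 * (p.1 * |d|) ≤ p.1 * (4 / 3 * ∑ i ∈ s, |g i|) := by
    have hsum := abs_sum_mul_le s (g := g) hc
    have hd := sq_mul_abs_le_of_mem_innerCone hp d
    rw [h] at hd
    linarith
  rw [div_mul_eq_mul_div, le_div_iff₀' ht]
  linarith [le_of_mul_le_mul_left hsq ht, Finset.sum_nonneg fun i (_ : i ∈ s) => abs_nonneg (g i)]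

theorem abs_pd1_le (f : ℝ × ℝ × ℝ → ℝ) {p : ℝ × ℝ × ℝ} (hp : p ∈ innerCone) :
    |pd1 f p| ≤ 2 / p.1 * ∑ i, |Gbar i f p| :=
  abs_le_of_minkowskiForm_mul_eq_sum hp (fun i _ => abs_pd1Coeff_le hp i)
    (minkowskiForm_mul_pd1 f p)

theorem abs_pd2_le (f : ℝ × ℝ × ℝ → ℝ) {p : ℝ × ℝ × ℝ} (hp : p ∈ innerCone) :
    |pd2 f p| ≤ 2 / p.1 * ∑ i, |Gbar i f p| :=
  abs_le_of_minkowskiForm_mul_eq_sum hp (fun i _ => abs_pd2Coeff_le hp i)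
    (minkowskiForm_mul_pd2 f p)

theorem abs_pd2_pd1_le {f : ℝ × ℝ × ℝ → ℝ} (hf : ContDiff ℝ 2 f) {p : ℝ × ℝ × ℝ}
    (hp : p ∈ innerCone) :
    |pd2 (pd1 f) p| ≤
      4 / p.1 ^ 2 * (∑ i, |Gbar i f p| + ∑ i, ∑ j, |Gbar i (Gbar j f) p|) := by
  have ht : 0 < p.1 := hp.1
  set A := ∑ i, |Gbar i f p|
  set B := ∑ i, ∑ j, |Gbar i (Gbar j f) p| with hB
  have hB_nonneg : 0 ≤ B := Finset.sum_nonneg fun i _ => Finset.sum_nonneg fun j _ => abs_nonneg _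
  have hΩ : |Gbar 3 f p| ≤ A :=
    Finset.single_le_sum (f := fun i => |Gbar i f p|) (fun i _ => abs_nonneg _)
      (Finset.mem_univ 3)
  have hpd1 : |2 * p.2.2 * pd1 f p| ≤ 2 * A := by
    calc |2 * p.2.2 * pd1 f p| = 2 * |p.2.2| * |pd1 f p| := by rw [abs_mul, abs_mul, abs_two]
      _ ≤ 2 * (p.1 / 2) * (2 / p.1 * A) := by
          gcongr
          exacts [abs_snd_le_of_mem_innerCone hp, abs_pd1_le f hp]
      _ = 2 * A := by field_simp
  have hpd2Γ : |∑ j, pd1Coeff p j * pd2 (Gbar j f) p| ≤ 2 * B := by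
    calc |∑ j, pd1Coeff p j * pd2 (Gbar j f) p| ≤ p.1 * ∑ j, |pd2 (Gbar j f) p| :=
          abs_sum_mul_le _ fun j _ => abs_pd1Coeff_le hp j
      _ ≤ p.1 * ∑ j, 2 / p.1 * ∑ i, |Gbar i (Gbar j f) p| := by
          gcongr with j
          exact abs_pd2_le (Gbar j f) hp
      _ = 2 * B := by
          rw [hB, Finset.sum_comm, ← Finset.mul_sum]
          field_simp
  have hform : |minkowskiForm p * pd2 (pd1 f) p| ≤ 2 * B + A + 2 * A := by
    rw [minkowskiForm_mul_pd2_pd1 hf]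
    exact (abs_add_three _ _ _).trans (add_le_add_three hpd2Γ hΩ hpd1)
  rw [div_mul_eq_mul_div, le_div_iff₀' (by positivity)]
  linarith [sq_mul_abs_le_of_mem_innerCone hp (pd2 (pd1 f) p)]

variable {f : ℝ × ℝ × ℝ → ℝ} {t : ℝ}

theorem L2ball_pd1_le (hf : ContDiff ℝ 1 f) (ht : 0 < t) :
    L2ball (pd1 f) t (t / 2) ≤ 2 / t * ∑ i, L2ball (Gbar i f) t (t / 2) :=
  L2ball_le_mul_sum (by positivity)
    (fun i => (contDiff_Gbar (m := 0) hf (zero_add 1).le i).continuous)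
    fun y hy => abs_pd1_le f (p := (t, y)) ⟨ht, hy⟩

theorem L2ball_pd2_le (hf : ContDiff ℝ 1 f) (ht : 0 < t) :
    L2ball (pd2 f) t (t / 2) ≤ 2 / t * ∑ i, L2ball (Gbar i f) t (t / 2) :=
  L2ball_le_mul_sum (by positivity)
    (fun i => (contDiff_Gbar (m := 0) hf (zero_add 1).le i).continuous)
    fun y hy => abs_pd2_le f (p := (t, y)) ⟨ht, hy⟩

theorem L2ball_pd2_pd1_le (hf : ContDiff ℝ 2 f) (ht : 0 < t) :
    L2ball (pd2 (pd1 f)) t (t / 2) ≤ 4 / t ^ 2 * (∑ i, L2ball (Gbar i f) t (t / 2) +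
      ∑ i, ∑ j, L2ball (Gbar i (Gbar j f)) t (t / 2)) := by
  have hΓ (i : Fin 4) : ContDiff ℝ 1 (Gbar i f) := contDiff_Gbar hf one_add_one_eq_two.le i
  have hΓΓ (i j : Fin 4) : Continuous (Gbar i (Gbar j f)) :=
    (contDiff_Gbar (m := 0) (hΓ j) (zero_add 1).le i).continuous
  let G : Fin 4 ⊕ Fin 4 × Fin 4 → ℝ × ℝ × ℝ → ℝ :=
    Sum.elim (fun i => Gbar i f) fun ij => Gbar ij.1 (Gbar ij.2 f)
  have hG : ∀ k, Continuous (G k) := Sum.rec (fun i => (hΓ i).continuous) fun ij => hΓΓ ij.1 ij.2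
  have hle : L2ball (pd2 (pd1 f)) t (t / 2) ≤ 4 / t ^ 2 * ∑ k, L2ball (G k) t (t / 2) := by
    refine L2ball_le_mul_sum (by positivity) hG fun y hy => ?_
    rw [Fintype.sum_sum_type, Fintype.sum_prod_type]
    exact abs_pd2_pd1_le hf (p := (t, y)) ⟨ht, hy⟩
  rwa [Fintype.sum_sum_type, Fintype.sum_prod_type] at hle

end KlainermanFields

theorem stmt16_general {f : ℝ × ℝ × ℝ → ℝ} (hf : ContDiff ℝ 2 f) {t ε : ℝ} (ht : 0 < t)
    (hε : 0 < ε) (hε_le : ε ≤ 1) {x : ℝ × ℝ} (hx : x.1 ^ 2 + x.2 ^ 2 ≤ (t / 4) ^ 2) :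
    |f (t, x.1, x.2)| ≤
      8 * (t⁻¹ * ε⁻¹ * L2ball f t (t / 2) +
        t⁻¹ * ∑ i : Fin 4, L2ball (Gbar i f) t (t / 2) +
        t⁻¹ * ε * ∑ i : Fin 4, ∑ j : Fin 4, L2ball (Gbar i (Gbar j f)) t (t / 2)) := by
  set A := ∑ i, L2ball (Gbar i f) t (t / 2)
  set B := ∑ i, ∑ j, L2ball (Gbar i (Gbar j f)) t (t / 2)
  have hA_nonneg : 0 ≤ A := Finset.sum_nonneg fun i _ => L2ball_nonneg _ _ _
  have hB_nonneg : 0 ≤ B := Finset.sum_nonneg fun i _ => Finset.sum_nonneg fun j _ =>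
    L2ball_nonneg _ _ _
  have hf₁ : ContDiff ℝ 1 f := hf.of_le one_le_two
  have hside : ε * t / 8 ≤ t / 8 := by gcongr; exact mul_le_of_le_one_left ht.le hε_le
  calc |f (t, x.1, x.2)|
      ≤ (ε * t / 8)⁻¹ * L2ball f t (t / 2) + L2ball (pd1 f) t (t / 2) +
          L2ball (pd2 f) t (t / 2) + ε * t / 8 * L2ball (pd2 (pd1 f)) t (t / 2) :=
        abs_le_L2ball_of_square_subset_disc hf (by positivity) (square_subset_disc hx hside)
    _ ≤ (ε * t / 8)⁻¹ * L2ball f t (t / 2) + 2 / t * A + 2 / t * A +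
          ε * t / 8 * (4 / t ^ 2 * (A + B)) := by
        gcongr
        exacts [L2ball_pd1_le hf₁ ht, L2ball_pd2_le hf₁ ht, L2ball_pd2_pd1_le hf ht]
    _ = 8 * (t⁻¹ * ε⁻¹ * L2ball f t (t / 2)) + (4 + ε / 2) * (t⁻¹ * A) +
          1 / 2 * (t⁻¹ * ε * B) := by
        field_simp
        ring
    _ ≤ 8 * (t⁻¹ * ε⁻¹ * L2ball f t (t / 2)) + 8 * (t⁻¹ * A) + 8 * (t⁻¹ * ε * B) := by
        gcongr
        · linarith
        · norm_num
    _ = 8 * (t⁻¹ * ε⁻¹ * L2ball f t (t / 2) + t⁻¹ * A + t⁻¹ * ε * B) := by ring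

/-- Modified Klainerman–Sobolev inequality (inner region): for `|x| ≤ t/4`,
`|f(t,x)| ≲ ∑_{i=0}^2 t⁻¹ δ^{(i-1)s} ‖Γ̄^i f(t,·)‖_{L²(|y| ≤ t/2)}`, with a
constant independent of `t`, `δ`, `s` and `f`. -/
theorem stmt16 :
    ∃ C : ℝ, 0 < C ∧ ∀ f : ℝ × ℝ × ℝ → ℝ, ContDiff ℝ (⊤ : ℕ∞) f →
      ∀ t s δ : ℝ, 1 ≤ t → 0 ≤ s → 0 < δ → δ ≤ 1 →
      ∀ x : ℝ × ℝ, x.1 ^ 2 + x.2 ^ 2 ≤ (t / 4) ^ 2 →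
        |f (t, x.1, x.2)| ≤
          C * (t⁻¹ * δ ^ (-s) * L2ball f t (t / 2) +
               t⁻¹ * ∑ i : Fin 4, L2ball (Gbar i f) t (t / 2) +
               t⁻¹ * δ ^ s *
                 ∑ i : Fin 4, ∑ j : Fin 4, L2ball (Gbar i (Gbar j f)) t (t / 2)) :=
  ⟨8, by norm_num, fun f hf t s δ ht hs hδ hδ_le x hx => by
    simpa only [Real.rpow_neg hδ.le] using stmt16_general (hf.of_le (WithTop.coe_le_coe.2 le_top))
      (one_pos.trans_le ht) (Real.rpow_pos_of_pos hδ s) (Real.rpow_le_one hδ.le hδ_le hs) hx⟩
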